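/- Let D, R_A, R_B be real numbers with D ≠ 0 and D·(D − R_A + R_B) ≠ 0, and suppose that J = (R_A − D)(R_B + D)/(D·(D − R_A + R_B)) satisfies −1 < J < 0. Then R_A·(R_A − D) and R_B·(R_B + D) are nonzero and have opposite signs; equivalently, R_A·(R_A − D)·R_B·(R_B + D) < 0. -/

import Mathlib

theorem mul_add_one_neg_iff {R : Type*} [Ring R] [LinearOrder R] [IsStrictOrderedRing R] {x : R} :
    x * (x + 1) < 0 ↔ -1 < x ∧ x < 0 := by
  rw [mul_neg_iff, ← neg_lt_iff_pos_add, ← lt_neg_iff_add_neg, and_comm (a := x < 0)]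
  refine or_iff_right fun ⟨hpos, hlt⟩ => ?_
  exact (hpos.trans hlt).not_gt neg_one_lt_zero

/-- The diffraction parameter `J` of two surfaces with radii of curvature `RA` and `RB` at
distance `D`. Its position relative to `-1` and `0` governs whether `RA * (RA - D)` and
`RB * (RB + D)` have opposite signs. It takes the junk value `0` when `D * (D - RA + RB) = 0`. -/
def diffractionParameter {K : Type*} [Field K] (D RA RB : K) : K :=
  (RA - D) * (RB + D) / (D * (D - RA + RB))

section Field

variable {K : Type*} [Field K] {D RA RB : K}

theorem diffractionParameter_add_one (hden : D * (D - RA + RB) ≠ 0) :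
    diffractionParameter D RA RB + 1 = RA * RB / (D * (D - RA + RB)) := by
  rw [diffractionParameter, div_add_one hden]
  ring

theorem diffractionParameter_mul_add_one (hden : D * (D - RA + RB) ≠ 0) :
    diffractionParameter D RA RB * (diffractionParameter D RA RB + 1) =
      RA * (RA - D) * (RB * (RB + D)) / (D * (D - RA + RB)) ^ 2 := by
  rw [diffractionParameter_add_one hden, diffractionParameter, div_mul_div_comm, ← sq]
  ring

end Field

theorem stmt14_general {K : Type*} [Field K] [LinearOrder K] [IsStrictOrderedRing K]
    {D RA RB : K} (hden : D * (D - RA + RB) ≠ 0) :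
    (-1 < diffractionParameter D RA RB ∧ diffractionParameter D RA RB < 0) ↔
      RA * (RA - D) * (RB * (RB + D)) < 0 := by
  rw [← mul_add_one_neg_iff, diffractionParameter_mul_add_one hden,
    div_lt_iff₀ (sq_pos_of_ne_zero hden), zero_mul]

/-- If the diffraction parameter `J = (R_A − D)(R_B + D)/(D(D − R_A + R_B))` satisfies
`−1 < J < 0`, then `R_A(R_A − D)` and `R_B(R_B + D)` are nonzero and have opposite signs. -/
theorem stmt14 (D RA RB : ℝ) (hD : D ≠ 0) (hden : D * (D - RA + RB) ≠ 0)
    (hJ1 : -1 < (RA - D) * (RB + D) / (D * (D - RA + RB)))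
    (hJ2 : (RA - D) * (RB + D) / (D * (D - RA + RB)) < 0) :
    RA * (RA - D) * (RB * (RB + D)) < 0 :=
  (stmt14_general hden).mp ⟨hJ1, hJ2⟩
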